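/- Assume f satisfies (A1)–(A3) and fix χ > 0. There is ε₀ > 0 (depending only on χ, β, a, K) such that for all 0 < ε < ε₀ and all x̂ ∈ NUE_χ: the map G_{x̂} := Ψ_{f̂^{−1}(x̂)}^{−1} ∘ g_{x̂} ∘ Ψ_{x̂} is a diffeomorphism from [−10Q_ε(x̂), 10Q_ε(x̂)] onto its image, and it can be written as G_{x̂}(t) = A t + h(t) where: (1) |A| < e^{−χ}; (2) h(0) = 0, (dh)_0 = 0, and ‖h‖₀ + ‖dh‖₀ + Hol_{β/2}(dh) < ε, the suprema and Hölder constant being taken over [−10Q_ε(x̂), 10Q_ε(x̂)]. In particular, sup |dG_{x̂}| < e^{−χ/2} on [−10Q_ε(x̂), 10Q_ε(x̂)]. -/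

import Mathlib

open Real MeasureTheory Filter Topology Metric Set

noncomputable section

namespace OneDim

/-- The interval `M = [0, 1/2]`. -/
def Mset : Set ℝ := Set.Icc 0 (1/2)

/-- Data of a piecewise `C^{1+β}` interval map `f : M → M` with discontinuity set `D`,
constants `β ∈ (0,1)`, `a, K > 1`, radius function `r` and inverse branches `g`. -/
structure GoodMap where
  f : ℝ → ℝ
  D : Set ℝ
  β : ℝ
  a : ℝ
  K : ℝ
  r : ℝ → ℝ
  g : ℝ → ℝ → ℝ
  hβ0 : 0 < β
  hβ1 : β < 1
  ha : 1 < a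
  hK : 1 < K
  hmaps : ∀ x ∈ Mset, f x ∈ Mset
  hD : D ⊆ Mset
  hdiff : DifferentiableOn ℝ f (Mset \ D)

namespace GoodMap

/-- The critical set `C = {x ∈ M \ D : df_x = 0}`. -/
def crit (F : GoodMap) : Set ℝ := {x | x ∈ Mset \ F.D ∧ deriv F.f x = 0}

/-- The singular set `S = C ∪ D`. -/
def S (F : GoodMap) : Set ℝ := F.crit ∪ F.D

/-- Distance to the singular set. -/
def dS (F : GoodMap) (x : ℝ) : ℝ := Metric.infDist x F.S

/-- Conditions (A1)–(A3). -/
def SatA (F : GoodMap) : Prop :=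
  ∀ x ∈ Mset, x ∉ F.S → F.f x ∉ F.S →
    (min (F.dS x ^ F.a) (F.dS (F.f x) ^ F.a) < F.r x ∧ F.r x < 1) ∧
    -- (A1)
    (Set.InjOn F.f (Metric.ball x (2 * F.r x)) ∧
      (∀ y ∈ Metric.ball x (2 * F.r x), DifferentiableAt ℝ F.f y) ∧
      F.g x (F.f x) = x ∧
      (∀ z ∈ Metric.ball (F.f x) (2 * F.r x), F.f (F.g x z) = z) ∧
      Set.InjOn (F.g x) (Metric.ball (F.f x) (2 * F.r x)) ∧
      (∀ z ∈ Metric.ball (F.f x) (2 * F.r x), DifferentiableAt ℝ (F.g x) z)) ∧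
    -- (A2)
    ((∀ y ∈ Metric.ball x (2 * F.r x),
        F.dS x ^ F.a ≤ |deriv F.f y| ∧ |deriv F.f y| ≤ F.dS x ^ (-F.a)) ∧
      (∀ z ∈ Metric.ball (F.f x) (2 * F.r x),
        F.dS x ^ F.a ≤ |deriv (F.g x) z| ∧ |deriv (F.g x) z| ≤ F.dS x ^ (-F.a))) ∧
    -- (A3)
    ((∀ y ∈ Metric.ball x (2 * F.r x), ∀ z ∈ Metric.ball x (2 * F.r x),
        |deriv F.f y - deriv F.f z| ≤ F.K * |y - z| ^ F.β) ∧
      (∀ y ∈ Metric.ball (F.f x) (2 * F.r x), ∀ z ∈ Metric.ball (F.f x) (2 * F.r x),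
        |deriv (F.g x) y - deriv (F.g x) z| ≤ F.K * |y - z| ^ F.β))

end GoodMap

/-- Membership in the natural extension space `M̂`. -/
def inMhat (f : ℝ → ℝ) (x : ℤ → ℝ) : Prop :=
  (∀ n, x n ∈ Mset) ∧ ∀ n : ℤ, f (x (n - 1)) = x n

/-- The natural extension map `f̂` (left shift). -/
def fhat (x : ℤ → ℝ) : ℤ → ℝ := fun n => x (n + 1)

/-- Iterate `f̂^k` of the natural extension map, `k ∈ ℤ`. -/
def fhatI (k : ℤ) (x : ℤ → ℝ) : ℤ → ℝ := fun n => x (n + k)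

/-- The metric `d̂(x̂,ŷ) = sup{2^n d(x_n,y_n) : n ≤ 0}` on `M̂`. -/
def dhat (x y : ℤ → ℝ) : ℝ :=
  sSup {t : ℝ | ∃ n : ℤ, n ≤ 0 ∧ t = (2:ℝ) ^ n * |x n - y n|}

/-- The invertible derivative cocycle `d̂f^{(n)}` over `f̂`. -/
def dfhat (f : ℝ → ℝ) (x : ℤ → ℝ) (n : ℤ) : ℝ :=
  if 0 ≤ n then ∏ j ∈ Finset.range n.toNat, deriv f (x (j : ℤ))
  else (∏ j ∈ Finset.range (-n).toNat, deriv f (x (-(j : ℤ) - 1)))⁻¹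

/-- The Pesin parameter `u(x̂)`. -/
def uPes (f : ℝ → ℝ) (χ : ℝ) (x : ℤ → ℝ) : ℝ :=
  Real.sqrt (∑' n : ℕ, Real.exp (2 * (n:ℝ) * χ) * (dfhat f x (-(n:ℤ))) ^ 2)

/-- The Pesin chart `Ψ_{x̂}(t) = t/u(x̂) + x₀`. -/
def Psi (f : ℝ → ℝ) (χ : ℝ) (x : ℤ → ℝ) (t : ℝ) : ℝ := t / uPes f χ x + x 0

/-- The set `NUE_χ`. -/
def NUE (F : GoodMap) (χ : ℝ) : Set (ℤ → ℝ) :=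
  {x | inMhat F.f x ∧ (∀ n, x n ∉ F.S) ∧
    (∃ l > χ, Tendsto (fun n : ℕ => Real.log |dfhat F.f x (n:ℤ)| / (n:ℝ)) atTop (𝓝 l)) ∧
    (∃ l > χ, Tendsto (fun n : ℕ => Real.log |dfhat F.f x (-(n:ℤ))| / (-(n:ℝ))) atTop (𝓝 l))}

/-- `ρ(x̂) = d({x₋₁,x₀,x₁}, S)`. -/
def rho (F : GoodMap) (x : ℤ → ℝ) : ℝ :=
  min (F.dS (x (-1))) (min (F.dS (x 0)) (F.dS (x 1)))

/-- `I_ε = {e^{-εn/3} : n ≥ 0}`. -/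
def Ieps (ε : ℝ) : Set ℝ := {q | ∃ n : ℕ, q = Real.exp (-(ε * n) / 3)}

/-- `Q̃_ε(x̂)`. -/
def Qtilde (F : GoodMap) (χ ε : ℝ) (x : ℤ → ℝ) : ℝ :=
  ε ^ (3 / F.β) *
    min (uPes F.f χ x ^ (-(24 / F.β)))
      (uPes F.f χ (fhatI (-1) x) ^ (-(12 / F.β)) * rho F x ^ (72 * F.a / F.β))

/-- `Q_ε(x̂) = max{q ∈ I_ε : q ≤ Q̃_ε(x̂)}`. -/
def Qeps (F : GoodMap) (χ ε : ℝ) (x : ℤ → ℝ) : ℝ :=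
  sSup {q | q ∈ Ieps ε ∧ q ≤ Qtilde F χ ε x}

/-- The regular set. -/
def Reg (F : GoodMap) : Set (ℤ → ℝ) :=
  {x | inMhat F.f x ∧ (∀ n, x n ∉ F.S) ∧
    Tendsto (fun n : ℕ => Real.log (F.dS (x (n:ℤ))) / (n:ℝ)) atTop (𝓝 0) ∧
    Tendsto (fun n : ℕ => Real.log (F.dS (x (-(n:ℤ)))) / (n:ℝ)) atTop (𝓝 0)}

/-- The set `NUE*_χ`. -/
def NUEstar (F : GoodMap) (χ : ℝ) : Set (ℤ → ℝ) :=
  {x | x ∈ NUE F χ ∧ x ∈ Reg F ∧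
    (∃ nk : ℕ → ℤ, Tendsto nk atTop atBot ∧
      Tendsto (fun k => uPes F.f χ (fhatI (nk k) x)) atTop (𝓝 (uPes F.f χ x))) ∧
    Tendsto (fun n : ℕ => Real.log (uPes F.f χ (fhatI (-(n:ℤ)) x)) / (-(n:ℝ))) atTop (𝓝 0)}

/-- An ε-chart is a pair `(x̂, p)`, representing `Ψ_{x̂}` restricted to `[-p,p]`. -/
structure Chart where
  x : ℤ → ℝ
  p : ℝ

/-- `(x̂, p)` is a genuine ε-chart. -/
def IsChart (F : GoodMap) (χ ε : ℝ) (c : Chart) : Prop :=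
  c.x ∈ NUE F χ ∧ 0 < c.p ∧ c.p ≤ Qeps F χ ε c.x

/-- ε-overlap of two ε-charts. -/
def Overlap (F : GoodMap) (χ ε : ℝ) (c₁ c₂ : Chart) : Prop :=
  Real.exp (-ε) ≤ c₁.p / c₂.p ∧ c₁.p / c₂.p ≤ Real.exp ε ∧
  |c₁.x 0 - c₂.x 0| + |(uPes F.f χ c₁.x)⁻¹ - (uPes F.f χ c₂.x)⁻¹| < (c₁.p * c₂.p) ^ 4

/-- `g_{x̂} = g_{x₋₁}`, the inverse branch of `f` taking `x₀` to `x₋₁`. -/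
def ghat (F : GoodMap) (x : ℤ → ℝ) : ℝ → ℝ := F.g (x (-1))

/-- `G_{x̂} = Ψ_{f̂⁻¹x̂}⁻¹ ∘ g_{x̂} ∘ Ψ_{x̂}`. -/
def Gmap (F : GoodMap) (χ : ℝ) (x : ℤ → ℝ) (t : ℝ) : ℝ :=
  uPes F.f χ (fhatI (-1) x) * (ghat F x (Psi F.f χ x t) - x (-1))

/-- `G_{x̂,ŷ} = Ψ_{ŷ}⁻¹ ∘ g_{x̂} ∘ Ψ_{x̂}`. -/
def Gmap2 (F : GoodMap) (χ : ℝ) (x y : ℤ → ℝ) (t : ℝ) : ℝ :=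
  uPes F.f χ y * (ghat F x (Psi F.f χ x t) - y 0)

/-- `F_{x̂} = Ψ_{f̂x̂}⁻¹ ∘ f ∘ Ψ_{x̂}`. -/
def Fmap (F : GoodMap) (χ : ℝ) (x : ℤ → ℝ) (t : ℝ) : ℝ :=
  uPes F.f χ (fhat x) * (F.f (Psi F.f χ x t) - x 1)

/-- `δ_ε = e^{-εn}` where `n` is the unique positive integer with `e^{-εn} < ε ≤ e^{-ε(n-1)}`. -/
def deltaEps (ε : ℝ) : ℝ :=
  Real.exp (-(ε * ((⌊Real.log (1 / ε) / ε⌋ + 1 : ℤ) : ℝ)))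

/-- Weak edge `v ⤎ w` (from `w = Ψ_{x̂}^p` to `v = Ψ_{ŷ}^q`). -/
def WeakEdge (F : GoodMap) (χ ε : ℝ) (v w : Chart) : Prop :=
  IsChart F χ ε v ∧ IsChart F χ ε w ∧
  Overlap F χ ε ⟨fhatI (-1) w.x, v.p⟩ v ∧
  w.p ≤ Real.exp ε * v.p

/-- Edge `v ← w` (from `w = Ψ_{x̂}^p` to `v = Ψ_{ŷ}^q`). -/
def Edge (F : GoodMap) (χ ε : ℝ) (v w : Chart) : Prop :=
  IsChart F χ ε v ∧ IsChart F χ ε w ∧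
  Overlap F χ ε ⟨fhatI (-1) w.x, v.p⟩ v ∧
  |v.x 1 - w.x 0| < v.p ∧
  Real.exp (-v.p) ≤ uPes F.f χ (fhat v.x) / uPes F.f χ w.x ∧
  uPes F.f χ (fhat v.x) / uPes F.f χ w.x ≤ Real.exp v.p ∧
  w.p = min (Real.exp ε * v.p) (deltaEps ε * Qeps F χ ε w.x)

/-- ε-generalized pseudo-orbit. -/
def IsGPO (F : GoodMap) (χ ε : ℝ) (v : ℤ → Chart) : Prop :=
  ∀ n : ℤ, Edge F χ ε (v n) (v (n + 1))

/-- weak ε-generalized pseudo-orbit. -/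
def IsWeakGPO (F : GoodMap) (χ ε : ℝ) (v : ℤ → Chart) : Prop :=
  ∀ n : ℤ, WeakEdge F χ ε (v n) (v (n + 1))

/-- The range `Ψ_{x̂}([-p,p])` of an ε-chart. -/
def chartRange (F : GoodMap) (χ : ℝ) (c : Chart) : Set ℝ :=
  Psi F.f χ c.x '' Set.Icc (-c.p) c.p

/-- A bi-infinite sequence of ε-charts shadows `x̂ ∈ M̂`. -/
def Shadows (F : GoodMap) (χ : ℝ) (v : ℤ → Chart) (x : ℤ → ℝ) : Prop :=
  inMhat F.f x ∧ ∀ n : ℤ, x n ∈ chartRange F χ (v n)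

/-- `q_ε(x̂) = δ_ε inf{e^{ε|m|} Q_ε(f̂^m x̂) : m ≤ 0}`. -/
def qeps (F : GoodMap) (χ ε : ℝ) (x : ℤ → ℝ) : ℝ :=
  deltaEps ε *
    sInf {t : ℝ | ∃ m : ℤ, m ≤ 0 ∧ t = Real.exp (ε * |(m:ℝ)|) * Qeps F χ ε (fhatI m x)}

/-- Recurrence: some symbol repeats infinitely often in the future and some in the past. -/
def Recurrent {V : Type*} (v : ℤ → V) : Prop :=
  (∃ c, {n : ℤ | 0 < n ∧ v n = c}.Infinite) ∧ ∃ c, {n : ℤ | n < 0 ∧ v n = c}.Infinite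

/-- The distance `d(v,w) = exp(-min{|n| : v_n ≠ w_n})` on sequence spaces. -/
def dSigma {V : Type*} (v w : ℤ → V) : ℝ :=
  sSup {t : ℝ | ∃ n : ℤ, v n ≠ w n ∧ t = Real.exp (-|(n:ℝ)|)}

/-- Sup norm over a set. -/
def supNorm (h : ℝ → ℝ) (I : Set ℝ) : ℝ := sSup ((fun t => |h t|) '' I)

/-- Hölder constant over a set. -/
def holConst (γ : ℝ) (h : ℝ → ℝ) (I : Set ℝ) : ℝ :=
  sSup {r : ℝ | ∃ t ∈ I, ∃ s ∈ I, t ≠ s ∧ r = |h t - h s| / |t - s| ^ γ}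

theorem hp_dS_pos (F : GoodMap) (hF : F.SatA) (χ : ℝ) (x : ℤ → ℝ) (hx : x ∈ NUE F χ) (n : ℤ) :
    0 < F.dS (x n) ∧ F.dS (x n) ≤ 1 ∧ deriv F.f (x n) ≠ 0 := by
  obtain ⟨⟨hM, hf⟩, hS, -⟩ := hx
  have hfn : F.f (x n) = x (n + 1) := by
    have := hf (n + 1); rwa [add_sub_cancel_right] at this
  have hd : deriv F.f (x n) ≠ 0 := by
    intro h0
    apply hS n
    by_cases hD : x n ∈ F.D
    · exact Or.inr hD
    · exact Or.inl ⟨⟨hM n, hD⟩, h0⟩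
  obtain ⟨⟨hr, -⟩, -, ⟨hA2, -⟩, -⟩ := hF (x n) (hM n) (hS n) (by rw [hfn]; exact hS _)
  have hnn : ∀ y, 0 ≤ F.dS y := fun y => Metric.infDist_nonneg
  have hrp : 0 < F.r (x n) :=
    lt_of_le_of_lt (le_min (Real.rpow_nonneg (hnn _) _) (Real.rpow_nonneg (hnn _) _)) hr
  have h2 := (hA2 (x n) (Metric.mem_ball_self (by linarith))).2
  have ha := F.ha
  have hpos : 0 < F.dS (x n) := by
    rcases (hnn (x n)).lt_or_eq with h | h
    · exact h
    · exfalso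
      rw [← h, Real.zero_rpow (by linarith)] at h2
      exact hd (abs_nonpos_iff.mp h2)
  refine ⟨hpos, ?_, hd⟩
  have hne : F.S.Nonempty := by
    by_contra hne
    rw [Set.not_nonempty_iff_eq_empty] at hne
    simp [GoodMap.dS, hne] at hpos
  obtain ⟨s, hs⟩ := hne
  have hsM : s ∈ Mset := by
    rcases hs with h | h
    · exact h.1.1
    · exact F.hD h
  have h3 : F.dS (x n) ≤ dist (x n) s := Metric.infDist_le_dist_of_mem hs
  have h4 := hM n
  simp only [Mset, Set.mem_Icc] at h4 hsM
  rw [Real.dist_eq] at h3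
  refine h3.trans ?_
  rw [abs_le]; constructor <;> linarith [h4.1, h4.2, hsM.1, hsM.2]

theorem hp_dfhat (f : ℝ → ℝ) (x : ℤ → ℝ) (n : ℕ) :
    dfhat f x (-(n : ℤ)) = (∏ j ∈ Finset.range n, deriv f (x (-(j : ℤ) - 1)))⁻¹ := by
  rcases Nat.eq_zero_or_pos n with h | h
  · subst h; simp [dfhat]
  · have : ¬ (0 ≤ -(n : ℤ)) := by omega
    rw [dfhat, if_neg this, neg_neg, Int.toNat_natCast]

theorem hp_dfhat_succ (f : ℝ → ℝ) (x : ℤ → ℝ) (n : ℕ) :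
    dfhat f x (-((n + 1 : ℕ) : ℤ)) =
      dfhat f (fhatI (-1) x) (-(n : ℤ)) * (deriv f (x (-1)))⁻¹ := by
  rw [hp_dfhat, hp_dfhat, Finset.prod_range_succ', mul_inv]
  congr 3
  funext j
  simp only [fhatI]
  congr 2
  push_cast; ring

theorem hp_summable (F : GoodMap) (χ : ℝ) (x : ℤ → ℝ) (hx : x ∈ NUE F χ)
    (hd : ∀ n, deriv F.f (x n) ≠ 0) :
    Summable (fun n : ℕ => Real.exp (2 * (n:ℝ) * χ) * (dfhat F.f x (-(n:ℤ))) ^ 2) := by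
  obtain ⟨-, -, -, l, hl, ht⟩ := hx
  have hm : (χ + l) / 2 < l := by linarith [show χ < l from hl]
  have hev := ht.eventually (lt_mem_nhds hm)
  have hgeo : Summable (fun n : ℕ => (Real.exp (χ - l)) ^ n) := by
    apply summable_geometric_of_lt_one (Real.exp_pos _).le
    rw [Real.exp_lt_one_iff]
    linarith [show χ < l from hl]
  refine Summable.of_norm_bounded_eventually_nat hgeo ?_
  filter_upwards [hev, eventually_gt_atTop 0] with n hn hn0
  have hnp : (0:ℝ) < n := by exact_mod_cast hn0
  have hne : dfhat F.f x (-(n:ℤ)) ≠ 0 := by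
    rw [hp_dfhat]
    exact inv_ne_zero (Finset.prod_ne_zero_iff.mpr fun j _ => hd _)
  have hap := abs_pos.mpr hne
  have h1 : Real.log |dfhat F.f x (-(n:ℤ))| < -(n * ((χ + l) / 2)) := by
    rw [div_neg, lt_neg, div_lt_iff₀ hnp] at hn
    linarith
  have h2 : |dfhat F.f x (-(n:ℤ))| ≤ Real.exp (-(n * ((χ + l) / 2))) := by
    rw [← Real.exp_log hap]; exact Real.exp_le_exp.mpr h1.le
  rw [Real.norm_of_nonneg (by positivity), ← sq_abs, ← Real.exp_nat_mul]
  calc _ ≤ Real.exp (2 * (n:ℝ) * χ) * (Real.exp (-(n * ((χ + l) / 2)))) ^ 2 := by gcongr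
    _ = _ := by
      rw [← Real.exp_nat_mul, ← Real.exp_add]
      congr 1; push_cast; ring

theorem hp_u (F : GoodMap) (χ : ℝ) (x : ℤ → ℝ) (hx : x ∈ NUE F χ)
    (hd : ∀ n, deriv F.f (x n) ≠ 0) :
    1 ≤ uPes F.f χ x ∧ 1 ≤ uPes F.f χ (fhatI (-1) x) ∧
    uPes F.f χ x ^ 2 = 1 + Real.exp χ ^ 2 *
      (uPes F.f χ (fhatI (-1) x) * (deriv F.f (x (-1)))⁻¹) ^ 2 := by
  have hs := hp_summable F χ x hx hd
  have hterm : ∀ n : ℕ, Real.exp (2 * ((n + 1 : ℕ):ℝ) * χ) *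
      (dfhat F.f x (-((n + 1 : ℕ):ℤ))) ^ 2 =
      (Real.exp χ ^ 2 * (deriv F.f (x (-1)))⁻¹ ^ 2) *
        (Real.exp (2 * (n:ℝ) * χ) * (dfhat F.f (fhatI (-1) x) (-(n:ℤ))) ^ 2) := by
    intro n
    rw [hp_dfhat_succ]
    have : Real.exp (2 * ((n + 1 : ℕ):ℝ) * χ) = Real.exp (2 * (n:ℝ) * χ) * Real.exp χ ^ 2 := by
      rw [← Real.exp_nat_mul, ← Real.exp_add]; congr 1; push_cast; ring
    rw [this]; ring
  have hc : Real.exp χ ^ 2 * (deriv F.f (x (-1)))⁻¹ ^ 2 ≠ 0 :=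
    mul_ne_zero (pow_ne_zero _ (Real.exp_pos _).ne') (pow_ne_zero _ (inv_ne_zero (hd _)))
  have hsy : Summable (fun n : ℕ => Real.exp (2 * (n:ℝ) * χ) *
      (dfhat F.f (fhatI (-1) x) (-(n:ℤ))) ^ 2) := by
    have h := (summable_nat_add_iff 1).mpr hs
    rw [← summable_mul_left_iff hc]
    exact h.congr (fun n => hterm n)
  have hnn : ∀ z : ℤ → ℝ, 0 ≤ ∑' n : ℕ, Real.exp (2 * (n:ℝ) * χ) * (dfhat F.f z (-(n:ℤ))) ^ 2 :=
    fun z => tsum_nonneg fun n => by positivity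
  have hone : ∀ z : ℤ → ℝ, Summable (fun n : ℕ => Real.exp (2 * (n:ℝ) * χ) *
      (dfhat F.f z (-(n:ℤ))) ^ 2) → 1 ≤ uPes F.f χ z := by
    intro z hz
    rw [uPes, Real.one_le_sqrt]
    have := hz.le_tsum 0 (fun n _ => by positivity)
    simpa [dfhat] using this
  refine ⟨hone _ hs, hone _ hsy, ?_⟩
  have h0 := hs.tsum_eq_zero_add
  simp only [hterm] at h0
  rw [tsum_mul_left] at h0
  rw [mul_pow]
  unfold uPes
  rw [Real.sq_sqrt (hnn _), Real.sq_sqrt (hnn _), h0]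
  simp [dfhat]
  ring

theorem hp_Q (F : GoodMap) (χ ε : ℝ) (x : ℤ → ℝ) (hε : 0 < ε) (hq : 0 < Qtilde F χ ε x) :
    0 < Qeps F χ ε x ∧ Qeps F χ ε x ≤ Qtilde F χ ε x := by
  obtain ⟨n, hn⟩ := exists_nat_gt (-(3 * Real.log (Qtilde F χ ε x)) / ε)
  have hmem : Real.exp (-(ε * n) / 3) ∈ {q | q ∈ Ieps ε ∧ q ≤ Qtilde F χ ε x} := by
    refine ⟨⟨n, rfl⟩, ?_⟩
    rw [← Real.le_log_iff_exp_le hq]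
    rw [div_lt_iff₀ hε] at hn
    linarith
  have hub : ∀ q ∈ {q | q ∈ Ieps ε ∧ q ≤ Qtilde F χ ε x}, q ≤ Qtilde F χ ε x := fun q h => h.2
  refine ⟨lt_of_lt_of_le (Real.exp_pos _) (le_csSup ⟨_, hub⟩ hmem), csSup_le ⟨_, hmem⟩ hub⟩

theorem hp_Qbound (F : GoodMap) (χ ε : ℝ) (x : ℤ → ℝ) (hε : 0 < ε) (hε1 : ε < 1 / 10)
    (hρ : 0 < rho F x) (hρ1 : rho F x ≤ 1)
    (hu : 1 ≤ uPes F.f χ x) (hv : 1 ≤ uPes F.f χ (fhatI (-1) x)) :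
    0 < Qeps F χ ε x ∧ 20 * Qeps F χ ε x ≤ rho F x ^ F.a ∧ 20 * Qeps F χ ε x ≤ 1 ∧
    uPes F.f χ (fhatI (-1) x) * (20 * Qeps F χ ε x) ^ (F.β / 2) ≤ 20 * ε ^ (3 / 2 : ℝ) := by
  set v := uPes F.f χ (fhatI (-1) x) with hvdef
  have hβ := F.hβ0
  have hβ1 := F.hβ1
  have ha := F.ha
  have hup : 0 < uPes F.f χ x := by linarith
  have hvp : 0 < v := by linarith
  have hqp : 0 < Qtilde F χ ε x := by
    unfold Qtilde
    rw [← hvdef]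
    positivity
  obtain ⟨h1, h2⟩ := hp_Q F χ ε x hε hqp
  set Q := Qeps F χ ε x
  have h3 : Q ≤ ε ^ (3 / F.β) * (v ^ (-(12 / F.β)) * rho F x ^ (72 * F.a / F.β)) :=
    h2.trans (mul_le_mul_of_nonneg_left (min_le_right _ _) (by positivity))
  have hv1 : v ^ (-(12 / F.β)) ≤ 1 :=
    Real.rpow_le_one_of_one_le_of_nonpos hv (by rw [neg_nonpos]; positivity)
  have hr1 : rho F x ^ (72 * F.a / F.β) ≤ 1 := Real.rpow_le_one hρ.le hρ1 (by positivity)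
  have hra : rho F x ^ (72 * F.a / F.β) ≤ rho F x ^ F.a := by
    apply Real.rpow_le_rpow_of_exponent_ge hρ hρ1
    rw [le_div_iff₀ hβ]; nlinarith
  have hra1 : rho F x ^ F.a ≤ 1 := Real.rpow_le_one hρ.le hρ1 (by linarith)
  have he : ε ^ (3 / F.β) ≤ 1 / 20 := by
    calc ε ^ (3 / F.β) ≤ ε ^ (3 : ℝ) := by
          apply Real.rpow_le_rpow_of_exponent_ge hε (by linarith)
          rw [le_div_iff₀ hβ]; nlinarith
      _ = ε ^ (3 : ℕ) := by rw [← Real.rpow_natCast]; norm_num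
      _ ≤ (1 / 10) ^ (3 : ℕ) := by gcongr
      _ ≤ 1 / 20 := by norm_num
  have h4 : 20 * Q ≤ rho F x ^ F.a := by
    have : Q ≤ 1 / 20 * (1 * rho F x ^ F.a) := h3.trans (by gcongr)
    linarith
  refine ⟨h1, h4, h4.trans hra1, ?_⟩
  have h5 : Q ≤ ε ^ (3 / F.β) * v ^ (-(12 / F.β)) := by
    refine h3.trans ?_
    gcongr
    exact mul_le_of_le_one_right (by positivity) hr1
  have h6 : (20 * Q) ^ (F.β / 2) ≤ 20 * (ε ^ (3 / 2 : ℝ) * v ^ (-6 : ℝ)) := by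
    calc (20 * Q) ^ (F.β / 2) ≤ (20 * (ε ^ (3 / F.β) * v ^ (-(12 / F.β)))) ^ (F.β / 2) := by
          gcongr
      _ = 20 ^ (F.β / 2) * (ε ^ (3 / 2 : ℝ) * v ^ (-6 : ℝ)) := by
          rw [Real.mul_rpow (by norm_num) (by positivity),
            Real.mul_rpow (by positivity) (by positivity), ← Real.rpow_mul hε.le,
            ← Real.rpow_mul hvp.le]
          have e1 : 3 / F.β * (F.β / 2) = 3 / 2 := by field_simp
          have e2 : -(12 / F.β) * (F.β / 2) = -6 := by field_simp; norm_num
          rw [e1, e2]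
      _ ≤ 20 ^ (1 : ℝ) * (ε ^ (3 / 2 : ℝ) * v ^ (-6 : ℝ)) := by
          gcongr
          · norm_num
          · linarith
      _ = _ := by rw [Real.rpow_one]
  have h7 : v * v ^ (-6 : ℝ) ≤ 1 := by
    rw [← Real.rpow_one_add' hvp.le (by norm_num)]
    exact Real.rpow_le_one_of_one_le_of_nonpos hv (by norm_num)
  calc v * (20 * Q) ^ (F.β / 2) ≤ v * (20 * (ε ^ (3 / 2 : ℝ) * v ^ (-6 : ℝ))) := by gcongr
    _ = 20 * ε ^ (3 / 2 : ℝ) * (v * v ^ (-6 : ℝ)) := by ring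
    _ ≤ 20 * ε ^ (3 / 2 : ℝ) * 1 := by gcongr
    _ = _ := mul_one _

set_option maxHeartbeats 2000000

/-- nonlinear Pesin reduction (Theorem 2.4) for `G_{x̂}`. -/
theorem nonlinear_pesin (β a K χ : ℝ) (hχ : 0 < χ) :
    ∃ ε₀ > 0, ∀ F : GoodMap, F.β = β → F.a = a → F.K = K → F.SatA →
      ∀ ε : ℝ, 0 < ε → ε < ε₀ → ∀ x ∈ NUE F χ,
        Set.InjOn (Gmap F χ x) (Set.Icc (-(10 * Qeps F χ ε x)) (10 * Qeps F χ ε x)) ∧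
        (∀ t ∈ Set.Icc (-(10 * Qeps F χ ε x)) (10 * Qeps F χ ε x),
          DifferentiableAt ℝ (Gmap F χ x) t ∧ deriv (Gmap F χ x) t ≠ 0) ∧
        (∃ A : ℝ, ∃ h : ℝ → ℝ,
          (∀ t ∈ Set.Icc (-(10 * Qeps F χ ε x)) (10 * Qeps F χ ε x),
            Gmap F χ x t = A * t + h t) ∧
          |A| < Real.exp (-χ) ∧
          h 0 = 0 ∧ deriv h 0 = 0 ∧
          supNorm h (Set.Icc (-(10 * Qeps F χ ε x)) (10 * Qeps F χ ε x)) +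
            supNorm (deriv h) (Set.Icc (-(10 * Qeps F χ ε x)) (10 * Qeps F χ ε x)) +
            holConst (F.β / 2) (deriv h)
              (Set.Icc (-(10 * Qeps F χ ε x)) (10 * Qeps F χ ε x)) < ε) ∧
        supNorm (deriv (Gmap F χ x))
          (Set.Icc (-(10 * Qeps F χ ε x)) (10 * Qeps F χ ε x)) < Real.exp (-χ / 2) := by
  have hgap : 0 < Real.exp (-χ / 2) - Real.exp (-χ) := by
    rw [sub_pos, Real.exp_lt_exp]; linarith
  refine ⟨min (1 / 10) (min ((1 / (100 * (|K| + 1))) ^ 2) (Real.exp (-χ / 2) - Real.exp (-χ))),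
    by positivity, ?_⟩
  intro F hβe hae hKe hF ε hε hε0 x hx
  simp only [lt_min_iff] at hε0
  obtain ⟨hε1, hε2, hε3⟩ := hε0
  subst hβe hae hKe
  have hβ := F.hβ0
  have hβ1 := F.hβ1
  have hK := F.hK
  have hpos := hp_dS_pos F hF χ x hx
  obtain ⟨hu, hv, huv⟩ := hp_u F χ x hx (fun n => (hpos n).2.2)
  have hρ : 0 < rho F x := by
    unfold rho
    exact lt_min (hpos _).1 (lt_min (hpos _).1 (hpos _).1)
  have hρ1 : rho F x ≤ 1 := (min_le_left _ _).trans (hpos _).2.1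
  obtain ⟨hQ0, hQρ, hQ1, hQv⟩ := hp_Qbound F χ ε x hε hε1 hρ hρ1 hu hv
  obtain ⟨⟨hM, hf⟩, hS, -⟩ := id hx
  have hf1 : F.f (x (-1)) = x 0 := by simpa using hf 0
  obtain ⟨⟨hr, -⟩, ⟨-, hfd, hgx, hfg, hginj, hgd⟩, ⟨-, hA2⟩, -, hA3⟩ :=
    hF (x (-1)) (hM _) (hS _) (by rw [hf1]; exact hS _)
  rw [hf1] at hr hgx hfg hginj hgd hA2 hA3
  have hrρ : rho F x ^ F.a < F.r (x (-1)) := by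
    refine lt_of_le_of_lt (le_min ?_ ?_) hr
    · exact Real.rpow_le_rpow hρ.le (min_le_left _ _) (by linarith [F.ha])
    · exact Real.rpow_le_rpow hρ.le ((min_le_right _ _).trans (min_le_left _ _))
        (by linarith [F.ha])
  have hrp : 0 < F.r (x (-1)) := lt_of_le_of_lt (by positivity) hrρ
  set r := F.r (x (-1))
  set Q := Qeps F χ ε x
  set u := uPes F.f χ x with hudef
  set v := uPes F.f χ (fhatI (-1) x) with hvdef
  set g := F.g (x (-1)) with hgdef
  have hup : 0 < u := by linarith
  have hvp : 0 < v := by linarith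
  have hball : ∀ t ∈ Set.Icc (-(10 * Q)) (10 * Q), Psi F.f χ x t ∈ Metric.ball (x 0) (2 * r) := by
    intro t ht
    have : |t| ≤ 10 * Q := abs_le.mpr ht
    rw [Metric.mem_ball, Real.dist_eq, Psi, ← hudef, add_sub_cancel_right, abs_div, abs_of_pos hup]
    have : |t| / u ≤ |t| := div_le_self (abs_nonneg _) hu
    linarith
  have hPsi0 : Psi F.f χ x 0 = x 0 := by simp [Psi]
  have hPsid : ∀ t, HasDerivAt (Psi F.f χ x) (1 / u) t := by
    intro t
    exact ((hasDerivAt_id t).div_const u).add_const (x 0)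
  have hGd : ∀ t ∈ Set.Icc (-(10 * Q)) (10 * Q),
      HasDerivAt (Gmap F χ x) (v * (deriv g (Psi F.f χ x t) * (1 / u))) t := by
    intro t ht
    have h1 := (hgd _ (hball t ht)).hasDerivAt
    exact ((h1.comp t (hPsid t)).sub_const (x (-1))).const_mul v
  have h0mem : (0:ℝ) ∈ Set.Icc (-(10 * Q)) (10 * Q) := ⟨by linarith, by linarith⟩
  have hgf : deriv F.f (x (-1)) * deriv g (x 0) = 1 := by
    have hx0 : x 0 ∈ Metric.ball (x 0) (2 * r) := Metric.mem_ball_self (by linarith)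
    have h1 := (hgd _ hx0).hasDerivAt
    have h2 : HasDerivAt F.f (deriv F.f (x (-1))) (g (x 0)) := by
      rw [hgx]
      exact (hfd _ (Metric.mem_ball_self (by linarith))).hasDerivAt
    have h3 := h2.comp (x 0) h1
    have h4 : F.f ∘ g =ᶠ[𝓝 (x 0)] id := by
      filter_upwards [Metric.isOpen_ball.mem_nhds hx0] with z hz
      exact hfg z hz
    exact h3.unique ((hasDerivAt_id (x 0)).congr_of_eventuallyEq h4)
  have hdf := (hpos (-1)).2.2
  have hg0 : deriv g (x 0) = (deriv F.f (x (-1)))⁻¹ := by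
    exact eq_inv_of_mul_eq_one_right hgf
  set A := v * (deriv g (x 0) * (1 / u)) with hAdef
  have hA : |A| < Real.exp (-χ) := by
    have h1 : (Real.exp χ * (A * u)) ^ 2 < u ^ 2 := by
      have : A * u = v * (deriv F.f (x (-1)))⁻¹ := by
        rw [hAdef, hg0]; field_simp
      rw [this, mul_pow]; linarith
    have h2 := sq_lt_sq.mp h1
    rw [abs_mul, abs_mul, abs_of_pos hup, abs_of_pos (Real.exp_pos χ)] at h2
    have h3 : Real.exp χ * |A| < 1 := by
      by_contra hc
      push Not at hc
      nlinarith
    rw [Real.exp_neg, ← one_div, lt_div_iff₀ (Real.exp_pos _)]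
    linarith
  set c := F.K * (20 * ε ^ (3 / 2 : ℝ)) with hc
  have hcp : 0 ≤ c := by positivity
  have hcε : 3 * c < ε := by
    have h1 : ε ^ (3 / 2 : ℝ) = ε * Real.sqrt ε := by
      rw [Real.sqrt_eq_rpow, ← Real.rpow_one_add' hε.le (by norm_num)]; norm_num
    have h2 : Real.sqrt ε < 1 / (100 * (|F.K| + 1)) := by
      rw [Real.sqrt_lt' (by positivity)]; exact hε2
    rw [abs_of_pos (by linarith), lt_div_iff₀ (by linarith)] at h2
    rw [hc, h1]
    have : F.K * Real.sqrt ε * 60 < 1 := by nlinarith [Real.sqrt_nonneg ε]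
    nlinarith
  set h : ℝ → ℝ := fun t => Gmap F χ x t - A * t with hh
  have hhd : ∀ t ∈ Set.Icc (-(10 * Q)) (10 * Q),
      HasDerivAt h (v * (deriv g (Psi F.f χ x t) * (1 / u)) - A) t := by
    intro t ht
    have := (hGd t ht).sub ((hasDerivAt_id t).const_mul A)
    rw [mul_one] at this
    exact this
  have hdh0 : deriv h 0 = 0 := by
    rw [(hhd 0 h0mem).deriv, hPsi0, hAdef]; ring
  have hh0 : h 0 = 0 := by
    simp only [hh, Gmap, ghat, hPsi0]
    rw [← hgdef, hgx]; ring
  have hHol : ∀ t ∈ Set.Icc (-(10 * Q)) (10 * Q), ∀ s ∈ Set.Icc (-(10 * Q)) (10 * Q),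
      |deriv h t - deriv h s| ≤ c * |t - s| ^ (F.β / 2) := by
    intro t ht s hs
    rw [(hhd t ht).deriv, (hhd s hs).deriv]
    have h1 := hA3 _ (hball t ht) _ (hball s hs)
    have h2 : Psi F.f χ x t - Psi F.f χ x s = (t - s) / u := by simp only [Psi, ← hudef]; ring
    have h3 : |Psi F.f χ x t - Psi F.f χ x s| ≤ |t - s| := by
      rw [h2, abs_div, abs_of_pos hup]; exact div_le_self (abs_nonneg _) hu
    have hts : |t - s| ≤ 20 * Q := by
      rw [abs_le]; constructor <;> linarith [ht.1, ht.2, hs.1, hs.2]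
    have h4 : |t - s| ^ F.β ≤ (20 * Q) ^ (F.β / 2) * |t - s| ^ (F.β / 2) := by
      have : |t - s| ^ F.β = |t - s| ^ (F.β / 2) * |t - s| ^ (F.β / 2) := by
        rw [← Real.rpow_add_of_nonneg (abs_nonneg _) (by positivity) (by positivity)]
        congr 1; ring
      rw [this]
      gcongr
    have h5 : |deriv g (Psi F.f χ x t) - deriv g (Psi F.f χ x s)| ≤
        F.K * ((20 * Q) ^ (F.β / 2) * |t - s| ^ (F.β / 2)) := by
      refine h1.trans ?_
      gcongr
      exact (Real.rpow_le_rpow (abs_nonneg _) h3 hβ.le).trans h4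
    have h6 : v * (deriv g (Psi F.f χ x t) * (1 / u)) - A -
        (v * (deriv g (Psi F.f χ x s) * (1 / u)) - A) =
        v * (deriv g (Psi F.f χ x t) - deriv g (Psi F.f χ x s)) / u := by ring
    rw [h6, abs_div, abs_of_pos hup, abs_mul, abs_of_pos hvp]
    calc _ ≤ v * |deriv g (Psi F.f χ x t) - deriv g (Psi F.f χ x s)| :=
          div_le_self (by positivity) hu
      _ ≤ v * (F.K * ((20 * Q) ^ (F.β / 2) * |t - s| ^ (F.β / 2))) := by gcongr
      _ = F.K * (v * (20 * Q) ^ (F.β / 2)) * |t - s| ^ (F.β / 2) := by ring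
      _ ≤ F.K * (20 * ε ^ (3 / 2 : ℝ)) * |t - s| ^ (F.β / 2) := by gcongr
      _ = _ := by rw [hc]
  have hdh : ∀ t ∈ Set.Icc (-(10 * Q)) (10 * Q), |deriv h t| ≤ c := by
    intro t ht
    have h1 := hHol t ht 0 h0mem
    rw [hdh0, sub_zero, sub_zero] at h1
    refine h1.trans (mul_le_of_le_one_right hcp ?_)
    apply Real.rpow_le_one (abs_nonneg _) _ (by positivity)
    have : |t| ≤ 10 * Q := abs_le.mpr ht
    linarith
  have hhb : ∀ t ∈ Set.Icc (-(10 * Q)) (10 * Q), |h t| ≤ c := by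
    intro t ht
    have h1 := (convex_Icc (-(10 * Q)) (10 * Q)).norm_image_sub_le_of_norm_deriv_le
      (f := h) (C := c) (fun s hs => (hhd s hs).differentiableAt)
      (fun s hs => hdh s hs) h0mem ht
    rw [hh0, sub_zero, sub_zero, Real.norm_eq_abs, Real.norm_eq_abs] at h1
    refine h1.trans (mul_le_of_le_one_right hcp ?_)
    have : |t| ≤ 10 * Q := abs_le.mpr ht
    linarith
  refine ⟨?_, ?_, ⟨A, h, ?_, hA, hh0, hdh0, ?_⟩, ?_⟩
  · intro t ht s hs hts
    simp only [Gmap, ghat] at hts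
    have h1 := mul_left_cancel₀ hvp.ne' hts
    have h2 := hginj (hball t ht) (hball s hs) (sub_left_injective h1)
    simp only [Psi, ← hudef] at h2
    have h3 := add_right_cancel h2
    exact (div_left_inj' hup.ne').mp h3
  · intro t ht
    refine ⟨(hGd t ht).differentiableAt, ?_⟩
    rw [(hGd t ht).deriv]
    have h1 := (hA2 _ (hball t ht)).1
    have h2 : 0 < F.dS (x (-1)) ^ F.a := Real.rpow_pos_of_pos (hpos _).1 _
    have h3 : deriv g (Psi F.f χ x t) ≠ 0 := abs_pos.mp (h2.trans_le h1)
    positivity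
  · intro t _
    simp only [hh]; ring
  · have e1 : supNorm h (Set.Icc (-(10 * Q)) (10 * Q)) ≤ c := by
      apply Real.sSup_le _ hcp
      rintro _ ⟨t, ht, rfl⟩
      exact hhb t ht
    have e2 : supNorm (deriv h) (Set.Icc (-(10 * Q)) (10 * Q)) ≤ c := by
      apply Real.sSup_le _ hcp
      rintro _ ⟨t, ht, rfl⟩
      exact hdh t ht
    have e3 : holConst (F.β / 2) (deriv h) (Set.Icc (-(10 * Q)) (10 * Q)) ≤ c := by
      apply Real.sSup_le _ hcp
      rintro _ ⟨t, ht, s, hs, hts, rfl⟩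
      have : 0 < |t - s| := abs_pos.mpr (sub_ne_zero.mpr hts)
      rw [div_le_iff₀ (by positivity)]
      exact hHol t ht s hs
    linarith
  · have e : supNorm (deriv (Gmap F χ x)) (Set.Icc (-(10 * Q)) (10 * Q)) ≤ |A| + c := by
      apply Real.sSup_le _ (by positivity)
      rintro _ ⟨t, ht, rfl⟩
      have h1 := hdh t ht
      rw [(hhd t ht).deriv] at h1
      simp only [(hGd t ht).deriv]
      have := abs_add_le A (v * (deriv g (Psi F.f χ x t) * (1 / u)) - A)
      rw [add_sub_cancel] at this
      linarith
    linarith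

end OneDim
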